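/- Let μ, ν be probability measures on ℝ^d, T ≥ 1, and for each t ∈ {1,…,T} let σ_t > 0 and w_t > 0. Define DiJS(μ‖ν) = Σ_{t=1}^T w_t · JS(μ ∗ γ_{σ_t} ‖ ν ∗ γ_{σ_t}), where γ_σ = N(0, σ²·I_d) and JS is the Jensen–Shannon divergence. Then DiJS(μ‖ν) = 0 if and only if μ = ν. -/

import Mathlib

open MeasureTheory Real
open scoped ENNReal Classical

/-- The isotropic centered Gaussian measure `N(0, σ²·I_d)` on `ℝ^d`, given by its
density `(2πσ²)^(-d/2) · exp(-‖x‖²/(2σ²))` with respect to Lebesgue measure. -/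
noncomputable def gaussianIso (d : ℕ) (σ : ℝ) : Measure (EuclideanSpace ℝ (Fin d)) :=
  volume.withDensity fun x =>
    ENNReal.ofReal ((2 * π * σ ^ 2) ^ (-(d : ℝ) / 2) * Real.exp (-‖x‖ ^ 2 / (2 * σ ^ 2)))

/-- The Kullback–Leibler divergence `KL(P‖Q) = ∫ log (dP/dQ) dP` when `P ≪ Q`
(and the integral makes sense), and `+∞` otherwise. -/
noncomputable def KL {α : Type*} [MeasurableSpace α] (P Q : Measure α) : ℝ≥0∞ :=
  if P ≪ Q ∧ Integrable (fun x => Real.log (P.rnDeriv Q x).toReal) P then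
    ENNReal.ofReal (∫ x, Real.log (P.rnDeriv Q x).toReal ∂P) else ⊤

/-- The Jensen–Shannon divergence `JS(P‖Q) = ½·KL(P‖m) + ½·KL(Q‖m)` where
`m = ½·P + ½·Q` is the equal-weight mixture. -/
noncomputable def JS {α : Type*} [MeasurableSpace α] (P Q : Measure α) : ℝ≥0∞ :=
  2⁻¹ * KL P ((2 : ℝ≥0∞)⁻¹ • P + (2 : ℝ≥0∞)⁻¹ • Q) +
    2⁻¹ * KL Q ((2 : ℝ≥0∞)⁻¹ • P + (2 : ℝ≥0∞)⁻¹ • Q)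

/-- The diffusive JS divergence: a positively weighted sum of JS divergences between
Gaussian-smoothed versions of the two measures at noise levels `σ 1, …, σ T`. -/
noncomputable def DiJS {d : ℕ} (T : ℕ) (w σ : Fin T → ℝ)
    (μ ν : Measure (EuclideanSpace ℝ (Fin d))) : ℝ≥0∞ :=
  ∑ t : Fin T, ENNReal.ofReal (w t) * JS (μ.conv (gaussianIso d (σ t))) (ν.conv (gaussianIso d (σ t)))

/-!
Every `KL P Q` dominates Mathlib's `klDiv P Q` up to the difference of total masses, and for the
equal-weight mixture these differences cancel between the two halves of `JS P Q`. Hence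
`JS P Q = 0` forces both divergences to the mixture to vanish, so `P` and `Q` both equal it.
Convolution with a Gaussian is injective on finite measures, because it multiplies the
characteristic function by `exp (-σ² ‖t‖² / 2)`, which never vanishes. A single noise level
therefore already separates finite measures.
-/

open InformationTheory

section Divergence

variable {α : Type*} [MeasurableSpace α]

lemma KL_self (P : Measure α) [SigmaFinite P] : KL P P = 0 := by
  have log_eq_zero : (fun x => Real.log (P.rnDeriv P x).toReal) =ᵐ[P] 0 := llr_self P
  have log_integrable : Integrable (fun x => Real.log (P.rnDeriv P x).toReal) P :=
    (integrable_congr log_eq_zero).2 (integrable_zero _ _ _)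
  rw [KL, if_pos ⟨Measure.AbsolutelyContinuous.rfl, log_integrable⟩,
    integral_congr_ae log_eq_zero]
  simp

lemma klDiv_add_univ_le_KL_add_univ (P Q : Measure α) [IsFiniteMeasure P] [IsFiniteMeasure Q] :
    klDiv P Q + P Set.univ ≤ KL P Q + Q Set.univ := by
  by_cases h : P ≪ Q ∧ Integrable (llr P Q) P
  · have KL_eq : KL P Q = ENNReal.ofReal (∫ x, llr P Q x ∂P) := if_pos h
    have gibbs := integral_llr_add_sub_measure_univ_nonneg h.1 h.2
    rw [KL_eq, klDiv_of_ac_of_integrable h.1 h.2, ← ofReal_measureReal (μ := P),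
      ← ofReal_measureReal (μ := Q), ← ENNReal.ofReal_add gibbs measureReal_nonneg,
      sub_add_cancel]
    exact ENNReal.ofReal_add_le
  · have KL_eq : KL P Q = ⊤ := if_neg h
    simp [KL_eq]

/-- The equal-weight mixture `(P + Q) / 2` of two measures, the reference measure in `JS P Q`. -/
noncomputable def equalMixture (P Q : Measure α) : Measure α :=
  (2 : ℝ≥0∞)⁻¹ • P + (2 : ℝ≥0∞)⁻¹ • Q

lemma equalMixture_self (P : Measure α) : equalMixture P P = P := by
  rw [equalMixture, ← add_smul, ENNReal.inv_two_add_inv_two, one_smul]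

lemma equalMixture_apply (P Q : Measure α) (s : Set α) :
    equalMixture P Q s = 2⁻¹ * P s + 2⁻¹ * Q s := by
  simp [equalMixture]

instance isFiniteMeasure_equalMixture (P Q : Measure α) [IsFiniteMeasure P] [IsFiniteMeasure Q] :
    IsFiniteMeasure (equalMixture P Q) := by
  have := P.smul_finite (c := 2⁻¹) (by simp)
  have := Q.smul_finite (c := 2⁻¹) (by simp)
  unfold equalMixture
  infer_instance

lemma JS_eq_KL_equalMixture (P Q : Measure α) :
    JS P Q = 2⁻¹ * KL P (equalMixture P Q) + 2⁻¹ * KL Q (equalMixture P Q) :=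
  rfl

lemma klDiv_equalMixture_le_JS (P Q : Measure α) [IsFiniteMeasure P] [IsFiniteMeasure Q] :
    2⁻¹ * klDiv P (equalMixture P Q) + 2⁻¹ * klDiv Q (equalMixture P Q) ≤ JS P Q := by
  set M := equalMixture P Q with hM
  have mass : M Set.univ = 2⁻¹ * P Set.univ + 2⁻¹ * Q Set.univ := equalMixture_apply P Q _
  refine (ENNReal.add_le_add_iff_right (measure_ne_top M Set.univ)).1 ?_
  calc 2⁻¹ * klDiv P M + 2⁻¹ * klDiv Q M + M Set.univ
      = 2⁻¹ * (klDiv P M + P Set.univ) + 2⁻¹ * (klDiv Q M + Q Set.univ) := by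
        rw [mass]; ring
    _ ≤ 2⁻¹ * (KL P M + M Set.univ) + 2⁻¹ * (KL Q M + M Set.univ) := by
        gcongr 2⁻¹ * ?_ + 2⁻¹ * ?_ <;> exact klDiv_add_univ_le_KL_add_univ _ M
    _ = JS P Q + (2⁻¹ + 2⁻¹) * M Set.univ := by
        rw [JS_eq_KL_equalMixture, ← hM]; ring
    _ = JS P Q + M Set.univ := by
        rw [ENNReal.inv_two_add_inv_two, one_mul]

lemma JS_self (P : Measure α) [SigmaFinite P] : JS P P = 0 := by
  simp [JS_eq_KL_equalMixture, equalMixture_self, KL_self]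

lemma JS_eq_zero_iff (P Q : Measure α) [IsFiniteMeasure P] [IsFiniteMeasure Q] :
    JS P Q = 0 ↔ P = Q := by
  refine ⟨fun h => ?_, fun h => h ▸ JS_self P⟩
  have klDiv_eq_zero : klDiv P (equalMixture P Q) = 0 ∧ klDiv Q (equalMixture P Q) = 0 := by
    simpa [h] using klDiv_equalMixture_le_JS P Q
  rw [klDiv_eq_zero_iff, klDiv_eq_zero_iff] at klDiv_eq_zero
  exact klDiv_eq_zero.1.trans klDiv_eq_zero.2.symm

end Divergence

lemma conv_left_inj_of_charFun_ne_zero {E : Type*} [NormedAddCommGroup E] [InnerProductSpace ℝ E]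
    [CompleteSpace E] [SecondCountableTopology E] [MeasurableSpace E] [BorelSpace E]
    {μ ν ρ : Measure E} [IsFiniteMeasure μ] [IsFiniteMeasure ν] [IsFiniteMeasure ρ]
    (hρ : ∀ t, charFun ρ t ≠ 0) : μ.conv ρ = ν.conv ρ ↔ μ = ν := by
  refine ⟨fun h => Measure.ext_of_charFun (funext fun t => ?_), fun h => h ▸ rfl⟩
  have charFun_mul_eq : charFun μ t * charFun ρ t = charFun ν t * charFun ρ t := by
    rw [← charFun_conv, ← charFun_conv, h]
  exact mul_right_cancel₀ (hρ t) charFun_mul_eq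

section Gaussian

variable {d : ℕ} {σ : ℝ}

lemma charFun_gaussianIso_eq_integral (d : ℕ) (σ : ℝ) (t : EuclideanSpace ℝ (Fin d)) :
    charFun (gaussianIso d σ) t = ((2 * π * σ ^ 2) ^ (-(d : ℝ) / 2) : ℝ) *
      ∫ x : EuclideanSpace ℝ (Fin d),
        Complex.exp (-((2 * σ ^ 2)⁻¹ : ℝ) * ‖x‖ ^ 2 + Complex.I * inner ℝ t x) := by
  rw [charFun_apply, gaussianIso, integral_withDensity_eq_integral_toReal_smul
    (by fun_prop) (by simp), ← integral_const_mul]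
  congr 1 with x
  rw [ENNReal.toReal_ofReal (by positivity), Complex.real_smul, Complex.ofReal_mul, mul_assoc,
    Complex.ofReal_exp, ← Complex.exp_add, real_inner_comm]
  congr 2
  push_cast
  ring

lemma charFun_gaussianIso (hσ : σ ≠ 0) (t : EuclideanSpace ℝ (Fin d)) :
    charFun (gaussianIso d σ) t = Complex.exp (-(σ ^ 2 * ‖t‖ ^ 2 / 2)) := by
  have base_pos : 0 < 2 * π * σ ^ 2 := by positivity
  have rate_pos : 0 < (((2 * σ ^ 2)⁻¹ : ℝ) : ℂ).re := by
    rw [Complex.ofReal_re]; positivity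
  have pi_div_rate : (π : ℂ) / ((2 * σ ^ 2)⁻¹ : ℝ) = (2 * π * σ ^ 2 : ℝ) := by
    push_cast; field_simp
  have normalization : (((2 * π * σ ^ 2) ^ (-(d : ℝ) / 2) : ℝ) : ℂ) *
      ((2 * π * σ ^ 2 : ℝ) : ℂ) ^ (d / 2 : ℂ) = 1 := by
    have exponent_cast : (d / 2 : ℂ) = ((d / 2 : ℝ) : ℂ) := by push_cast; rfl
    rw [exponent_cast, ← Complex.ofReal_cpow base_pos.le, ← Complex.ofReal_mul,
      ← Real.rpow_add base_pos, neg_div, neg_add_cancel, Real.rpow_zero,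
      Complex.ofReal_one]
  rw [charFun_gaussianIso_eq_integral,
    GaussianFourier.integral_cexp_neg_mul_sq_norm_add rate_pos, finrank_euclideanSpace_fin,
    pi_div_rate, ← mul_assoc, normalization, one_mul, Complex.I_sq]
  congr 1
  have sigma_ne_zero : (σ : ℂ) ≠ 0 := Complex.ofReal_ne_zero.2 hσ
  push_cast
  field_simp
  ring

lemma isProbabilityMeasure_gaussianIso (hσ : σ ≠ 0) : IsProbabilityMeasure (gaussianIso d σ) := by
  have mass_eq_one : ((gaussianIso d σ).real Set.univ : ℂ) = 1 := by
    rw [← charFun_zero, charFun_gaussianIso hσ]; simp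
  rwa [Complex.ofReal_eq_one, ← isProbabilityMeasure_iff_real] at mass_eq_one

lemma JS_conv_gaussianIso_eq_zero_iff (hσ : σ ≠ 0) (μ ν : Measure (EuclideanSpace ℝ (Fin d)))
    [IsFiniteMeasure μ] [IsFiniteMeasure ν] :
    JS (μ.conv (gaussianIso d σ)) (ν.conv (gaussianIso d σ)) = 0 ↔ μ = ν := by
  have := isProbabilityMeasure_gaussianIso (d := d) hσ
  rw [JS_eq_zero_iff, conv_left_inj_of_charFun_ne_zero]
  intro t
  rw [charFun_gaussianIso hσ]
  exact Complex.exp_ne_zero _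

end Gaussian

theorem diJS_eq_zero_iff_general {d : ℕ} {T : ℕ} (hT : 1 ≤ T) (w σ : Fin T → ℝ)
    (hw : ∀ t, 0 < w t) (hσ : ∀ t, σ t ≠ 0)
    (μ ν : Measure (EuclideanSpace ℝ (Fin d))) [IsFiniteMeasure μ] [IsFiniteMeasure ν] :
    DiJS T w σ μ ν = 0 ↔ μ = ν := by
  have term_eq_zero_iff (t : Fin T) : ENNReal.ofReal (w t) *
      JS (μ.conv (gaussianIso d (σ t))) (ν.conv (gaussianIso d (σ t))) = 0 ↔ μ = ν := by
    rw [mul_eq_zero_iff_left (ENNReal.ofReal_pos.2 (hw t)).ne',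
      JS_conv_gaussianIso_eq_zero_iff (hσ t)]
  have : Nonempty (Fin T) := ⟨⟨0, hT⟩⟩
  simp only [DiJS, Finset.sum_eq_zero_iff, Finset.mem_univ, term_eq_zero_iff, forall_const]

/-- Validity of the diffusive JS divergence: `DiJS(μ‖ν) = 0` iff `μ = ν`. -/
theorem diJS_eq_zero_iff {d : ℕ} {T : ℕ} (hT : 1 ≤ T) (w σ : Fin T → ℝ)
    (hw : ∀ t, 0 < w t) (hσ : ∀ t, 0 < σ t)
    (μ ν : Measure (EuclideanSpace ℝ (Fin d)))
    [IsProbabilityMeasure μ] [IsProbabilityMeasure ν] :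
    DiJS T w σ μ ν = 0 ↔ μ = ν :=
  diJS_eq_zero_iff_general hT w σ hw (fun t => (hσ t).ne') μ ν
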